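/- Let 0 ≤ α < 2/3 and λ ≥ 1. If ν/λ ≪ 1 (ν fixed or small relative to λ) then ‖H_ν(λ·)‖²_{L²([1,1+λ^{−α}])} ≲ λ^{−1−α}; and if ε₀ ≤ c := ν/λ ≤ 1 − ε₀ for some fixed ε₀ ∈ (0,1), then ‖H_ν(λ·)‖²_{L²([1,1+λ^{−α}])} ≃ (1/(πλ)) · λ^{−α} / ((1 − c² + λ^{−α})^{1/2} + (1 − c²)^{1/2}), uniformly in ν and λ. -/

import Mathlib

noncomputable section

open Real Complex Filter

/-- `H` is the Hankel function of the first kind of order `ν`, viewed on `(0,∞)`: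
it is a (twice continuously differentiable) solution of the Bessel equation
`z²y'' + zy' + (z² - ν²)y = 0` with the outgoing asymptotic behaviour
`H(z) ~ (2/(πz))^{1/2} e^{i(z - πν/2 - π/4)}` as `z → ∞`, which characterizes it
uniquely among solutions of the Bessel equation. Its real and imaginary parts are
the Bessel functions `J_ν` and `Y_ν`. -/
structure IsHankel (ν : ℝ) (H : ℝ → ℂ) : Prop where
  smooth : ContDiffOn ℝ 2 H (Set.Ioi 0)
  ode : ∀ z : ℝ, 0 < z →
    (z:ℂ)^2 * deriv (deriv H) z + (z:ℂ) * deriv H z + ((z:ℂ)^2 - (ν:ℂ)^2) * H z = 0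
  outgoing : Tendsto
    (fun z : ℝ => H z /
      ((Real.sqrt (2 / (π * z)) : ℂ) * Complex.exp (Complex.I * ((z:ℂ) - π*ν/2 - π/4))))
    atTop (nhds 1)


lemma hk_mono {f f' : ℝ → ℝ} {L : ℝ} (h : ∀ z, 0 < z → HasDerivAt f (f' z) z)
    (hn : ∀ z, 0 < z → 0 ≤ f' z) (hL : Tendsto f atTop (nhds L)) {z : ℝ} (hz : 0 < z) :
    f z ≤ L := by
  have hm : MonotoneOn f (Set.Ioi 0) := by
    apply monotoneOn_of_deriv_nonneg (convex_Ioi 0)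
    · exact fun x hx => (h x hx).continuousAt.continuousWithinAt
    · rw [interior_Ioi]
      exact fun x hx => (h x hx).differentiableAt.differentiableWithinAt
    · rw [interior_Ioi]
      intro x hx
      rw [(h x hx).deriv]
      exact hn x hx
  apply ge_of_tendsto hL
  filter_upwards [eventually_ge_atTop z] with y hy
  exact hm hz (lt_of_lt_of_le hz hy) hy

/-- a convergent function with convergent derivative has derivative tending to zero -/
lemma hk_deriv_zero {v v' : ℝ → ℂ} {a b : ℂ} (h : ∀ z, 0 < z → HasDerivAt v (v' z) z)
    (hv : Tendsto v atTop (nhds a)) (hv' : Tendsto v' atTop (nhds b)) : b = 0 := by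
  have h1 : Tendsto (fun z => v (z+1) - v z) atTop (nhds (a - a)) :=
    (hv.comp (tendsto_atTop_add_const_right _ 1 tendsto_id)).sub hv
  rw [sub_self] at h1
  have h2 : Tendsto (fun z => v (z+1) - v z) atTop (nhds b) := by
    rw [Metric.tendsto_atTop] at hv' ⊢
    intro ε hε
    obtain ⟨N, hN⟩ := hv' (ε/2) (by positivity)
    refine ⟨max N 1, fun z hz => ?_⟩
    have hz1 : N ≤ z := le_trans (le_max_left _ _) hz
    have hz2 : 1 ≤ z := le_trans (le_max_right _ _) hz
    have := norm_image_sub_le_of_norm_deriv_le_segment' (f := fun y => v y - (y:ℂ) * b)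
      (f' := fun y => v' y - 1 * b) (a := z) (b := z+1) (C := ε/2)
      (fun x hx => ((h x (by linarith [hx.1])).sub
        ((HasDerivAt.ofReal_comp (hasDerivAt_id x)).mul_const b)).hasDerivWithinAt)
      (fun x hx => by
        have := hN x (by linarith [hx.1])
        rw [dist_eq_norm] at this
        rw [one_mul]; exact this.le) (z+1) ⟨by linarith, le_rfl⟩
    rw [dist_eq_norm]
    have e : v (z+1) - v z - b = v (z+1) - ((z+1:ℝ):ℂ) * b - (v z - (z:ℂ) * b) := by
      push_cast; ring
    rw [e]
    linarith
  exact tendsto_nhds_unique h2 h1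

lemma hk_exp (z : ℝ) : HasDerivAt (fun z : ℝ => Complex.exp (-(Complex.I * z)))
    (-(Complex.I) * Complex.exp (-(Complex.I * z))) z := by
  have h : HasDerivAt (fun z : ℝ => -(Complex.I * (z:ℂ))) (-(Complex.I * ((1:ℝ):ℂ))) z :=
    ((HasDerivAt.ofReal_comp (hasDerivAt_id z)).const_mul _).neg
  have := h.cexp
  convert this using 1
  push_cast; ring

lemma hk_norm_exp (z : ℝ) : ‖Complex.exp (-(Complex.I * z))‖ = 1 := by
  rw [Complex.norm_exp]; simp

section
variable {μ : ℝ} {u u' : ℝ → ℂ} {a : ℂ}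

lemma hk_lim (hu : ∀ z, 0 < z → HasDerivAt u (u' z) z)
    (hu' : ∀ z, 0 < z → HasDerivAt u' (-((1 - μ / z^2 : ℝ) : ℂ) * u z) z)
    (ha : Tendsto (fun z : ℝ => Complex.exp (-(Complex.I * z)) * u z) atTop (nhds a)) :
    Tendsto (fun z : ℝ => Complex.exp (-(Complex.I * z)) * u' z) atTop
      (nhds (Complex.I * a)) := by
  set e : ℝ → ℂ := fun z : ℝ => Complex.exp (-(Complex.I * z)) with he
  have hs : ∀ z, 0 < z → HasDerivAt (fun z => e z * (u' z + Complex.I * u z))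
      (((μ * z ^ (-2:ℝ) : ℝ):ℂ) * (e z * u z)) z := by
    intro z hz
    have := (hk_exp z).mul ((hu' z hz).add ((hu z hz).const_mul Complex.I))
    refine HasDerivAt.congr_deriv this ?_
    have : z ^ (-2:ℝ) = 1 / z^2 := by
      rw [Real.rpow_neg hz.le]; simp
    simp only [he, this, Pi.add_apply]
    push_cast
    have h2 : Complex.I * Complex.I = -1 := Complex.I_mul_I
    linear_combination (-Complex.exp (-(Complex.I * z)) * u z) * h2
  have hev : ∀ᶠ z in atTop, ‖e z * u z‖ < ‖a‖ + 1 :=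
    ha.norm.eventually_lt_const (by linarith)
  obtain ⟨N, hN⟩ := eventually_atTop.1 hev
  set M := max N 1
  have hM : 0 < M := lt_of_lt_of_le one_pos (le_max_right _ _)
  have hcu : ContinuousOn (fun z => ((μ * z ^ (-2:ℝ) : ℝ):ℂ) * (e z * u z)) (Set.Ioi M) := by
    intro z hz
    have hz0 : 0 < z := hM.trans hz
    apply ContinuousAt.continuousWithinAt
    apply ContinuousAt.mul
    · apply Complex.continuous_ofReal.continuousAt.comp
      exact continuousAt_const.mul (Real.continuousAt_rpow_const _ _ (Or.inl hz0.ne'))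
    · exact (hk_exp z).continuousAt.mul (hu z hz0).continuousAt
  have hint : MeasureTheory.IntegrableOn
      (fun z => ((μ * z ^ (-2:ℝ) : ℝ):ℂ) * (e z * u z)) (Set.Ioi M) := by
    have h0 := (integrableOn_Ioi_rpow_of_lt (a := -2) (by norm_num) hM).const_mul
      (|μ| * (‖a‖+1))
    refine MeasureTheory.Integrable.mono' h0 (hcu.aestronglyMeasurable measurableSet_Ioi) ?_
    refine (MeasureTheory.ae_restrict_iff' measurableSet_Ioi).2 (Eventually.of_forall ?_)
    intro z hz
    have hz0 : 0 < z := hM.trans hz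
    have h1 := hN z ((le_max_left _ _).trans (le_of_lt hz))
    rw [norm_mul, Complex.norm_real, norm_mul, Real.norm_eq_abs, Real.norm_eq_abs,
      abs_of_pos (Real.rpow_pos_of_pos hz0 _)]
    have : 0 ≤ |μ| * z ^ (-2:ℝ) := by positivity
    nlinarith
  have hS := MeasureTheory.tendsto_limUnder_of_hasDerivAt_of_integrableOn_Ioi
    (fun z hz => hs z (hM.trans hz)) hint
  set S := atTop.limUnder (fun z => e z * (u' z + Complex.I * u z))
  have hv' : Tendsto (fun z => e z * (u' z - Complex.I * u z)) atTop
      (nhds (S - 2 * Complex.I * a)) := by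
    refine (hS.sub (ha.const_mul (2 * Complex.I))).congr ?_
    intro z
    simp only [he]; ring
  have h0 : S - 2 * Complex.I * a = 0 := by
    refine hk_deriv_zero (v := fun z => e z * u z) ?_ ha hv'
    intro z hz
    refine HasDerivAt.congr_deriv ((hk_exp z).mul (hu z hz)) ?_
    simp only [he]; ring
  rw [h0] at hv'
  have := hv'.add (ha.const_mul Complex.I)
  rw [zero_add] at this
  refine this.congr ?_
  intro z
  simp only [he]; ring

lemma hk_core (hμ : -(1/4) ≤ μ) (hu : ∀ z, 0 < z → HasDerivAt u (u' z) z)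
    (hu' : ∀ z, 0 < z → HasDerivAt u' (-((1 - μ / z^2 : ℝ) : ℂ) * u z) z)
    (ha : Tendsto (fun z : ℝ => Complex.exp (-(Complex.I * z)) * u z) atTop (nhds a))
    (ha0 : a ≠ 0) {z : ℝ} (hz : 1 ≤ z) (hq : 0 ≤ 1 - μ / z^2) :
    (1 - μ / z^2) * ‖u z‖^2 ≤ 5/2 * ‖a‖^2 ∧ 2/5 * ‖a‖^2 ≤ ‖u z‖^2 := by
  have hz0 : 0 < z := by linarith
  have hl := hk_lim hu hu' ha
  have n1 : Tendsto (fun z => ‖u z‖^2) atTop (nhds (‖a‖^2)) := by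
    refine (ha.norm.pow 2).congr fun z => ?_
    rw [norm_mul, hk_norm_exp, one_mul]
  have n2 : Tendsto (fun z => ‖u' z‖^2) atTop (nhds (‖a‖^2)) := by
    have := hl.norm.pow 2
    rw [norm_mul, Complex.norm_I, one_mul] at this
    refine this.congr fun z => ?_
    rw [norm_mul, hk_norm_exp, one_mul]
  have hqd : ∀ z : ℝ, 0 < z → HasDerivAt (fun z : ℝ => 1 - μ / z^2) (2 * μ / z^3) z := by
    intro z hz
    have := ((hasDerivAt_const z μ).div (hasDerivAt_pow 2 z) (by positivity)).const_sub 1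
    refine HasDerivAt.congr_deriv this ?_
    field_simp
    push_cast; ring
  have hql : Tendsto (fun z : ℝ => 1 - μ / z^2) atTop (nhds 1) := by
    have : Tendsto (fun z : ℝ => μ / z^2) atTop (nhds 0) :=
      tendsto_const_nhds.div_atTop (tendsto_pow_atTop two_ne_zero)
    simpa using this.const_sub 1
  have hE : ∀ z : ℝ, 0 < z → HasDerivAt (fun z => ‖u' z‖^2 + (1 - μ / z^2) * ‖u z‖^2)
      (2 * μ / z^3 * ‖u z‖^2) z := by
    intro z hz
    have := (hu' z hz).norm_sq.add ((hqd z hz).mul (hu z hz).norm_sq)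
    refine HasDerivAt.congr_deriv this ?_
    simp only [Complex.inner]
    simp only [Complex.mul_re, Complex.mul_im, Complex.neg_re, Complex.neg_im,
      Complex.ofReal_re, Complex.ofReal_im, Complex.conj_re, Complex.conj_im]
    ring
  have hEl : Tendsto (fun z => ‖u' z‖^2 + (1 - μ / z^2) * ‖u z‖^2) atTop
      (nhds (2 * ‖a‖^2)) := by
    convert n2.add (hql.mul n1) using 2
    ring
  have hEb : ‖u' z‖^2 + (1 - μ / z^2) * ‖u z‖^2 ≤ 5/2 * ‖a‖^2 := by
    have hA : 0 ≤ ‖a‖^2 := by positivity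
    rcases le_total 0 μ with h | h
    · have := hk_mono hE (fun z hz => by positivity) hEl hz0
      linarith
    · have hq1 : ∀ z : ℝ, 0 < z → 1 ≤ 1 - μ / z^2 := by
        intro z hz
        have : μ / z^2 ≤ 0 := div_nonpos_of_nonpos_of_nonneg h (by positivity)
        linarith
      have := hk_mono (f := fun z => (‖u' z‖^2 + (1 - μ / z^2) * ‖u z‖^2) / (1 - μ / z^2))
        (L := 2 * ‖a‖^2 / 1)
        (fun z hz => (hE z hz).div (hqd z hz) (by linarith [hq1 z hz]))
        (fun z hz => by
          apply div_nonneg _ (by positivity)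
          have h3 : 2 * μ / z^3 ≤ 0 :=
            div_nonpos_of_nonpos_of_nonneg (by linarith) (by positivity)
          have : 0 ≤ (- (2 * μ / z^3)) * ‖u' z‖^2 := mul_nonneg (by linarith) (by positivity)
          linarith) (hEl.div hql one_ne_zero) hz0
      simp only [div_one] at this
      rw [div_le_iff₀ (by linarith [hq1 z hz0])] at this
      have h4 : 1 - μ / z^2 ≤ 5/4 := by
        have : -μ / z^2 ≤ 1/4 := by
          rw [div_le_iff₀ (by positivity)]
          nlinarith
        rw [neg_div] at this
        linarith
      nlinarith
  have hW : inner ℝ (Complex.I * u z) (u' z) = ‖a‖^2 := by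
    have hd : ∀ z : ℝ, 0 < z → HasDerivAt (fun z => inner ℝ (Complex.I * u z) (u' z)) 0 z := by
      intro z hz
      have := ((hu z hz).const_mul Complex.I).inner ℝ (hu' z hz)
      refine HasDerivAt.congr_deriv this ?_
      simp only [Complex.inner]
      simp only [Complex.mul_re, Complex.mul_im, Complex.neg_re, Complex.neg_im,
        Complex.ofReal_re, Complex.ofReal_im, Complex.conj_re, Complex.conj_im,
        Complex.I_re, Complex.I_im]
      ring
    have hWl : Tendsto (fun z => inner ℝ (Complex.I * u z) (u' z)) atTop (nhds (‖a‖^2)) := by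
      have := (ha.const_mul Complex.I).inner (𝕜 := ℝ) hl
      rw [real_inner_self_eq_norm_sq, norm_mul, Complex.norm_I, one_mul] at this
      refine this.congr fun z => ?_
      have hn : (Complex.exp (-(Complex.I * z))).re^2 + (Complex.exp (-(Complex.I * z))).im^2
          = 1 := by
        have := hk_norm_exp z
        have h2 := Complex.sq_norm (Complex.exp (-(Complex.I * z)))
        rw [this, Complex.normSq_apply] at h2
        linarith
      generalize Complex.exp (-(Complex.I * z)) = e at hn
      simp only [Complex.inner]
      simp only [Complex.mul_re, Complex.mul_im, Complex.conj_re, Complex.conj_im,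
        Complex.I_re, Complex.I_im]
      linear_combination ((u z).re * (u' z).im - (u z).im * (u' z).re) * hn
    refine tendsto_nhds_unique ?_ hWl
    refine Tendsto.congr' ?_ tendsto_const_nhds
    filter_upwards [eventually_gt_atTop 0] with y hy
    exact isOpen_Ioi.is_const_of_deriv_eq_zero (convex_Ioi (0:ℝ)).isPreconnected
      (fun x hx => (hd x hx).differentiableAt.differentiableWithinAt)
      (fun x hx => (hd x hx).deriv) hz0 hy
  have hcs := real_inner_le_norm (Complex.I * u z) (u' z)
  rw [hW, norm_mul, Complex.norm_I, one_mul] at hcs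
  have hA : 0 < ‖a‖^2 := by positivity
  have hp : 0 ≤ (1 - μ / z^2) * ‖u z‖^2 := by positivity
  refine ⟨by nlinarith [sq_nonneg ‖u' z‖], ?_⟩
  have h1 : ‖u' z‖^2 ≤ 5/2 * ‖a‖^2 := by linarith
  have h2 : (‖a‖^2)^2 ≤ ‖u z‖^2 * ‖u' z‖^2 := by
    rw [← mul_pow]; exact pow_le_pow_left₀ hA.le hcs 2
  have h3 : ‖u z‖^2 * ‖u' z‖^2 ≤ ‖u z‖^2 * (5/2 * ‖a‖^2) := by gcongr
  have h4 : ‖a‖^2 * ‖a‖^2 ≤ (5/2 * ‖u z‖^2) * ‖a‖^2 := by nlinarith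
  have := le_of_mul_le_mul_right h4 hA
  linarith
end

lemma hk_pointwise {ν : ℝ} {H : ℝ → ℂ} (hH : IsHankel ν H) {z : ℝ} (hz : 1 ≤ z)
    (hq : 0 ≤ 1 - (ν^2 - 1/4) / z^2) :
    (1 - (ν^2 - 1/4) / z^2) * (z * ‖H z‖^2) ≤ 5/π ∧ 4/(5*π) ≤ z * ‖H z‖^2 := by
  have hz0 : 0 < z := by linarith
  have d1 : ∀ z, 0 < z → HasDerivAt H (deriv H z) z := fun z hz =>
    ((hH.smooth.differentiableOn (by norm_num)).differentiableAt (Ioi_mem_nhds hz)).hasDerivAt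
  have d2 : ∀ z, 0 < z → HasDerivAt (deriv H) (deriv (deriv H) z) z := by
    intro z hz
    have : ContDiffOn ℝ 1 (deriv H) (Set.Ioi 0) :=
      hH.smooth.deriv_of_isOpen isOpen_Ioi (by norm_num)
    exact ((this.differentiableOn (by norm_num)).differentiableAt (Ioi_mem_nhds hz)).hasDerivAt
  have ds : ∀ z, 0 < z → HasDerivAt (fun z : ℝ => ((√z : ℝ) : ℂ)) (((1 / (2 * √z) : ℝ)) : ℂ) z :=
    fun z hz => (Real.hasDerivAt_sqrt hz.ne').ofReal_comp
  have dsi : ∀ z, 0 < z → HasDerivAt (fun z : ℝ => (((1 / (2 * √z) : ℝ)) : ℂ))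
      (((-(1 / (4 * z * √z)) : ℝ)) : ℂ) z := by
    intro z hz
    have hs : 0 < √z := Real.sqrt_pos.2 hz
    apply HasDerivAt.ofReal_comp (f := fun z : ℝ => 1 / (2 * √z))
    refine HasDerivAt.congr_deriv ((hasDerivAt_const z (1:ℝ)).div
      ((Real.hasDerivAt_sqrt hz.ne').const_mul 2) (by positivity)) ?_
    have : z = √z ^ 2 := (Real.sq_sqrt hz.le).symm
    generalize √z = s at *
    subst this
    field_simp
    ring
  set a : ℂ := ((√(2/π) : ℝ) : ℂ) * Complex.exp (((-(π*ν/2 + π/4) : ℝ) : ℂ) * Complex.I) with ha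
  have hna : ‖a‖^2 = 2/π := by
    rw [ha, norm_mul, Complex.norm_exp_ofReal_mul_I, mul_one, Complex.norm_real,
      Real.norm_eq_abs, sq_abs, Real.sq_sqrt (by positivity)]
  have hu : ∀ z, 0 < z → HasDerivAt (fun z : ℝ => ((√z : ℝ) : ℂ) * H z)
      (((1 / (2 * √z) : ℝ) : ℂ) * H z + ((√z : ℝ) : ℂ) * deriv H z) z :=
    fun z hz => (ds z hz).mul (d1 z hz)
  have hlim : Tendsto (fun z : ℝ => Complex.exp (-(Complex.I * z)) * (((√z : ℝ) : ℂ) * H z))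
      atTop (nhds a) := by
    have := hH.outgoing.mul_const a
    rw [one_mul] at this
    refine this.congr' ?_
    filter_upwards [eventually_gt_atTop 0] with z hz
    have hs : 0 < √z := Real.sqrt_pos.2 hz
    have hsp : 0 < √(2/π) := Real.sqrt_pos.2 (by positivity)
    have e1 : √(2/(π*z)) = √(2/π) / √z := by
      rw [← Real.sqrt_div (by positivity), div_div]
    have e2 : Complex.exp (Complex.I * ((z:ℂ) - π*ν/2 - π/4)) =
        Complex.exp (((-(π*ν/2 + π/4) : ℝ) : ℂ) * Complex.I) / Complex.exp (-(Complex.I * z)) := by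
      rw [← Complex.exp_sub]
      congr 1
      push_cast; ring
    rw [e1, e2, ha]
    have hs' : ((√z : ℝ) : ℂ) ≠ 0 := by exact_mod_cast hs.ne'
    have hsp' : ((√(2/π) : ℝ) : ℂ) ≠ 0 := by exact_mod_cast hsp.ne'
    have x1 := Complex.exp_ne_zero (-(Complex.I * z))
    have x2 := Complex.exp_ne_zero (((-(π*ν/2 + π/4) : ℝ) : ℂ) * Complex.I)
    rw [Complex.ofReal_div]
    generalize Complex.exp (-(Complex.I * z)) = E1 at *
    generalize Complex.exp (((-(π*ν/2 + π/4) : ℝ) : ℂ) * Complex.I) = E2 at *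
    generalize ((√z : ℝ) : ℂ) = E3 at *
    generalize ((√(2/π) : ℝ) : ℂ) = E4 at *
    field_simp
  have key := hk_core (μ := ν^2 - 1/4) (u := fun z : ℝ => ((√z : ℝ) : ℂ) * H z) (a := a)
    (by nlinarith [sq_nonneg ν]) hu (by
      intro z hz
      refine HasDerivAt.congr_deriv (((dsi z hz).mul (d1 z hz)).add
        ((ds z hz).mul (d2 z hz))) ?_
      have hs : 0 < √z := Real.sqrt_pos.2 hz
      have hode := hH.ode z hz
      have hzz : z = √z ^ 2 := (Real.sq_sqrt hz.le).symm
      have hs' : ((√z : ℝ) : ℂ) ≠ 0 := by exact_mod_cast hs.ne'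
      have hzc : (z:ℂ) = ((√z : ℝ) : ℂ)^2 := by exact_mod_cast hzz
      push_cast
      rw [hzc] at hode ⊢
      generalize ((√z : ℝ) : ℂ) = s at *
      generalize deriv (deriv H) z = h2 at *
      generalize deriv H z = h1 at *
      generalize H z = h0 at *
      field_simp
      linear_combination 8 * hode) hlim (by
      intro h0
      rw [h0] at hna
      have : 0 < 2/π := by positivity
      simp at hna
      linarith [Real.pi_pos]) hz hq
  rw [hna] at key
  have hn : ‖((√z : ℝ) : ℂ) * H z‖^2 = z * ‖H z‖^2 := by
    rw [norm_mul, mul_pow, Complex.norm_real, Real.norm_eq_abs, sq_abs, Real.sq_sqrt hz0.le]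
  simp only [hn] at key
  refine ⟨key.1.trans (le_of_eq (by ring)), le_trans (le_of_eq ?_) key.2⟩
  have := Real.pi_pos
  field_simp
  norm_num

lemma hk_layer {α ε ν lam : ℝ} {H : ℝ → ℂ} (hα0 : 0 ≤ α) (hε : 0 < ε) (hl : 1 ≤ lam)
    (hν0 : 0 ≤ ν / lam) (hν : ν / lam ≤ 1 - ε) (hH : IsHankel ν H) :
    2/(5*π*lam) * lam ^ (-α) ≤ (∫ r in Set.Icc (1:ℝ) (1 + lam ^ (-α)), ‖H (lam * r)‖ ^ 2) ∧
    (∫ r in Set.Icc (1:ℝ) (1 + lam ^ (-α)), ‖H (lam * r)‖ ^ 2) ≤ 5/(π*ε*lam) * lam ^ (-α) := by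
  have hl0 : 0 < lam := by linarith
  have hp : 0 < lam ^ (-α) := Real.rpow_pos_of_pos hl0 _
  have hp1 : lam ^ (-α) ≤ 1 := Real.rpow_le_one_of_one_le_of_nonpos hl (by linarith)
  have hpi := Real.pi_pos
  have hpt : ∀ r ∈ Set.Icc (1:ℝ) (1 + lam ^ (-α)),
      2/(5*π*lam) ≤ ‖H (lam * r)‖^2 ∧ ‖H (lam * r)‖^2 ≤ 5/(π*ε*lam) := by
    intro r hr
    have hr1 := hr.1
    have hr2 : r ≤ 2 := by linarith [hr.2]
    have hz : lam ≤ lam * r := by nlinarith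
    have hz0 : 0 < lam * r := by linarith
    have hq : ε ≤ 1 - (ν^2 - 1/4) / (lam * r)^2 := by
      have h1 : (ν^2 - 1/4) / (lam * r)^2 ≤ (ν/lam)^2 := by
        rw [div_pow, div_le_div_iff₀ (by positivity) (by positivity)]
        have : lam^2 ≤ (lam*r)^2 := by gcongr
        nlinarith [sq_nonneg ν, sq_nonneg lam]
      nlinarith
    obtain ⟨k1, k2⟩ := hk_pointwise hH (hl.trans hz) (hε.le.trans hq)
    set X := ‖H (lam * r)‖^2
    have hX : 0 ≤ X := by positivity
    constructor
    · rw [div_le_iff₀ (by positivity)] at k2 ⊢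
      have : lam * r * X ≤ lam * 2 * X := by gcongr
      nlinarith
    · rw [le_div_iff₀ (by positivity)] at k1 ⊢
      refine le_trans ?_ k1
      have : ε * (lam * X) ≤ (1 - (ν^2 - 1/4) / (lam * r)^2) * (lam * r * X) := by
        gcongr
        linarith
      nlinarith
  have hc : ContinuousOn (fun r => ‖H (lam * r)‖^2) (Set.Icc (1:ℝ) (1 + lam ^ (-α))) := by
    apply ContinuousOn.pow
    apply ContinuousOn.norm
    apply hH.smooth.continuousOn.comp (by fun_prop)
    intro r hr
    have := hr.1
    show 0 < lam * r
    positivity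
  have hi : MeasureTheory.IntegrableOn (fun r => ‖H (lam * r)‖^2)
      (Set.Icc (1:ℝ) (1 + lam ^ (-α))) := hc.integrableOn_Icc
  have hconst : ∀ c : ℝ, ∫ r in Set.Icc (1:ℝ) (1 + lam ^ (-α)), c = c * lam ^ (-α) := by
    intro c
    rw [MeasureTheory.setIntegral_const]
    simp [MeasureTheory.measureReal_def, hp.le, mul_comm]
  constructor
  · rw [← hconst]
    exact MeasureTheory.setIntegral_mono_on (by simp) hi measurableSet_Icc
      (fun r hr => (hpt r hr).1)
  · rw [← hconst (5/(π*ε*lam))]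
    exact MeasureTheory.setIntegral_mono_on hi (by simp) measurableSet_Icc
      (fun r hr => (hpt r hr).2)

/-- **L² bounds for Hankel functions in a boundary layer.** Let `0 ≤ α < 2/3`.
If `ν/λ ≪ 1` then `∫_1^{1+λ^{-α}} |H_ν(λr)|² dr ≲ λ^{-1-α}`; and if
`ε₀ ≤ c := ν/λ ≤ 1 - ε₀` for some fixed `ε₀ ∈ (0,1)` then
`∫_1^{1+λ^{-α}} |H_ν(λr)|² dr ≃ (1/(πλ)) λ^{-α}/((1-c²+λ^{-α})^{1/2} + (1-c²)^{1/2})`,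
uniformly in `ν` and `λ`. -/
theorem hankel_layer_L2_bounds (α : ℝ) (hα0 : 0 ≤ α) (hα : α < 2/3) :
    (∃ δ > 0, ∃ C > 0, ∀ lam ≥ (1:ℝ), ∀ ν : ℝ, 0 ≤ ν → ν / lam ≤ δ →
      ∀ H : ℝ → ℂ, IsHankel ν H →
        (∫ r in Set.Icc (1:ℝ) (1 + lam ^ (-α)), ‖H (lam * r)‖ ^ 2)
          ≤ C * lam ^ (-1 - α))
    ∧
    (∀ ε₀ : ℝ, 0 < ε₀ → ε₀ < 1 → ∃ C ≥ (1:ℝ), ∀ lam ≥ (1:ℝ), ∀ ν : ℝ,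
      ε₀ ≤ ν / lam → ν / lam ≤ 1 - ε₀ →
      ∀ H : ℝ → ℂ, IsHankel ν H →
        (1/C) * ((1 / (π * lam)) * lam ^ (-α) /
            (Real.sqrt (1 - (ν/lam)^2 + lam ^ (-α)) + Real.sqrt (1 - (ν/lam)^2)))
          ≤ (∫ r in Set.Icc (1:ℝ) (1 + lam ^ (-α)), ‖H (lam * r)‖ ^ 2) ∧
        (∫ r in Set.Icc (1:ℝ) (1 + lam ^ (-α)), ‖H (lam * r)‖ ^ 2)
          ≤ C * ((1 / (π * lam)) * lam ^ (-α) /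
            (Real.sqrt (1 - (ν/lam)^2 + lam ^ (-α)) + Real.sqrt (1 - (ν/lam)^2)))) := by
  constructor
  · refine ⟨1/2, by norm_num, 10/π, by positivity, ?_⟩
    intro lam hl ν hν0 hν H hH
    have hl0 : 0 < lam := by linarith
    have := (hk_layer (ε := 1/2) hα0 (by norm_num) hl (by positivity) (by linarith) hH).2
    refine this.trans (le_of_eq ?_)
    rw [sub_eq_add_neg, Real.rpow_add hl0, Real.rpow_neg_one]
    have := Real.pi_pos
    field_simp
    norm_num
  · intro ε hε hε1
    refine ⟨15/ε, by rw [ge_iff_le, le_div_iff₀ hε]; linarith, ?_⟩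
    intro lam hl ν hν1 hν2 H hH
    have hl0 : 0 < lam := by linarith
    have hpi := Real.pi_pos
    obtain ⟨k1, k2⟩ := hk_layer hα0 hε hl (by linarith) hν2 hH
    have hp : 0 < lam ^ (-α) := Real.rpow_pos_of_pos hl0 _
    have hp1 : lam ^ (-α) ≤ 1 := Real.rpow_le_one_of_one_le_of_nonpos hl (by linarith)
    set c := ν / lam
    set P := lam ^ (-α)
    have hc1 : ε ≤ 1 - c^2 := by nlinarith
    have hD1 : ε ≤ √(1 - c^2) := by
      apply Real.le_sqrt_of_sq_le
      nlinarith
    have hD2 : √(1 - c^2) ≤ 1 := by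
      rw [Real.sqrt_le_left (by norm_num)]
      nlinarith
    have hD3 : √(1 - c^2 + P) ≤ 2 := by
      rw [Real.sqrt_le_left (by norm_num)]
      nlinarith
    have hD4 := Real.sqrt_nonneg (1 - c^2 + P)
    set D := √(1 - c^2 + P) + √(1 - c^2)
    have hDl : ε ≤ D := by linarith
    have hDu : D ≤ 3 := by linarith
    have hD0 : 0 < D := by linarith
    constructor
    · refine le_trans ?_ k1
      have e : 1 / (15/ε) * (1 / (π*lam) * P / D) = (ε / (15 * D)) * (P / (π * lam)) := by
        field_simp
      have e' : 2/(5*π*lam) * P = (2/5) * (P / (π * lam)) := by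
        field_simp
      rw [e, e']
      refine mul_le_mul_of_nonneg_right ?_ (by positivity)
      rw [div_le_iff₀ (by positivity)]
      linarith
    · refine le_trans k2 ?_
      have e : 15/ε * (1 / (π*lam) * P / D) = (15 / (ε * D)) * (P / (π * lam)) := by
        field_simp
      have e' : 5/(π*ε*lam) * P = (5/ε) * (P / (π * lam)) := by
        field_simp
      rw [e, e']
      refine mul_le_mul_of_nonneg_right ?_ (by positivity)
      rw [div_le_div_iff₀ hε (by positivity)]
      nlinarith
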